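/- (Theorem 5.6 of Ramanujan–Berndt–Bhargava–Garvan.) For every real p with 0 ≤ p < 1, one has ₂F₁(1/3, 2/3; 1; β(p)) = γ(p) · ₂F₁(1/2, 1/2; 1; α(p)). (For such p both arguments α(p) and β(p) lie in [0,1), so both hypergeometric series converge absolutely.) -/

import Mathlib

open Real

/-- Gauss hypergeometric function ₂F₁ defined via its power series
    (the tsum; converges absolutely for |z| < 1). -/
noncomputable def hyp2F1 (a b c z : ℝ) : ℝ :=
  ∑' n : ℕ, ((ascPochhammer ℝ n).eval a * (ascPochhammer ℝ n).eval b /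
      (ascPochhammer ℝ n).eval c) * z ^ n / (Nat.factorial n)

noncomputable def α (p : ℝ) : ℝ := p ^ 3 * (2 + p) / (1 + 2 * p)

noncomputable def β (p : ℝ) : ℝ := 27 * p ^ 2 * (1 + p) ^ 2 / (4 * (1 + p + p ^ 2) ^ 3)

noncomputable def γ (p : ℝ) : ℝ := (1 + p + p ^ 2) / Real.sqrt (1 + 2 * p)

/-- coefficients of `₂F₁(a,b;1;z)` -/
noncomputable def hc (a b : ℝ) (n : ℕ) : ℝ :=
  (ascPochhammer ℝ n).eval a * (ascPochhammer ℝ n).eval b /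
      (ascPochhammer ℝ n).eval 1 / (Nat.factorial n)

lemma hc_zero (a b : ℝ) : hc a b 0 = 1 := by simp [hc]

lemma hc_succ (a b : ℝ) (n : ℕ) :
    ((n : ℝ) + 1) ^ 2 * hc a b (n + 1) = (a + n) * (b + n) * hc a b n := by
  have h1 : (Nat.factorial n : ℝ) ≠ 0 := by positivity
  have h2 : (n : ℝ) + 1 ≠ 0 := by positivity
  simp only [hc, ascPochhammer_succ_eval, ascPochhammer_eval_one, Nat.factorial_succ]
  push_cast
  field_simp
  ring

lemma hc_bound {a b : ℝ} (ha : 0 < a) (hb : 0 < b) (hab : a + b = 1) (n : ℕ) :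
    0 ≤ hc a b n ∧ hc a b n ≤ 1 := by
  induction n with
  | zero => simp [hc_zero]
  | succ n ih =>
    have h := hc_succ a b n
    have hn : (0 : ℝ) ≤ n := by positivity
    have h2 : (0 : ℝ) < ((n : ℝ) + 1) ^ 2 := by positivity
    have hle : (a + n) * (b + n) ≤ ((n : ℝ) + 1) ^ 2 := by nlinarith
    have hge : 0 ≤ (a + n) * (b + n) := by positivity
    constructor
    · by_contra hcon
      push Not at hcon
      have := mul_nonneg hge ih.1
      nlinarith
    · have : (a + n) * (b + n) * hc a b n ≤ ((n : ℝ) + 1) ^ 2 * 1 := by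
        apply mul_le_mul hle ih.2 ih.1 h2.le
      rw [← h] at this
      exact le_of_mul_le_mul_left this h2

lemma ps_summable {c : ℕ → ℝ} (hc1 : ∀ n, |c n| ≤ 1) {z : ℝ} (hz : |z| < 1) :
    Summable fun n => c n * z ^ n := by
  refine Summable.of_norm_bounded (g := fun n => |z| ^ n)
    (summable_geometric_of_lt_one (abs_nonneg z) hz) fun n => ?_
  rw [norm_mul, norm_pow, Real.norm_eq_abs, Real.norm_eq_abs]
  exact mul_le_of_le_one_left (by positivity) (hc1 n)

lemma ps_summable_mul {c : ℕ → ℝ} (hc1 : ∀ n, |c n| ≤ 1) {z : ℝ} (hz : |z| < 1) :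
    Summable fun n : ℕ => (n : ℝ) * c n * z ^ n := by
  refine Summable.of_norm_bounded (g := fun n : ℕ => (n : ℝ) * |z| ^ n) ?_ fun n => ?_
  · have := summable_pow_mul_geometric_of_norm_lt_one 1 (r := |z|) (by simpa using hz)
    simpa using this
  · rw [norm_mul, norm_mul, norm_pow, Real.norm_eq_abs, Real.norm_eq_abs, Real.norm_eq_abs,
      Nat.abs_cast]
    exact mul_le_mul_of_nonneg_right (mul_le_of_le_one_right (by positivity) (hc1 n))
      (by positivity)

lemma ps_summable_deriv {r : ℝ} (hr : |r| < 1) :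
    Summable fun n : ℕ => (n : ℝ) * r ^ (n - 1) := by
  rw [← summable_nat_add_iff 1]
  have h1 := summable_pow_mul_geometric_of_norm_lt_one 1 (r := r) (by simpa using hr)
  have h0 := summable_pow_mul_geometric_of_norm_lt_one 0 (r := r) (by simpa using hr)
  refine (h1.add h0).congr fun n => ?_
  simp
  ring

lemma ps_hasDerivAt {c : ℕ → ℝ} (hc1 : ∀ n, |c n| ≤ 1) {z : ℝ} (hz : |z| < 1) :
    HasDerivAt (fun z => ∑' n, c n * z ^ n) (∑' n : ℕ, ((n : ℝ) + 1) * c (n + 1) * z ^ n) z := by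
  obtain ⟨r, hr1, hr2⟩ := exists_between hz
  have hr0 : 0 < r := (abs_nonneg z).trans_lt hr1
  have hr : |r| < 1 := by rwa [abs_of_pos hr0]
  have hzm : z ∈ Metric.ball (0 : ℝ) r := by simpa using hr1
  have key := hasDerivAt_tsum_of_isPreconnected (𝕜 := ℝ)
    (g := fun n z => c n * z ^ n) (g' := fun n z => c n * ((n : ℝ) * z ^ (n - 1)))
    (t := Metric.ball (0 : ℝ) r) (y₀ := z) (y := z)
    (ps_summable_deriv hr) Metric.isOpen_ball (convex_ball _ _).isPreconnected
    (fun n y _ => (hasDerivAt_pow n y).const_mul (c n))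
    (fun n y hy => ?_) hzm (ps_summable hc1 hz) hzm
  · refine key.congr_deriv ?_
    have hs : Summable fun n : ℕ => c n * ((n : ℝ) * z ^ (n - 1)) := by
      refine Summable.of_norm_bounded (ps_summable_deriv (r := |z|) (by simpa using hz))
        fun n => ?_
      rw [norm_mul, norm_mul, norm_pow, Real.norm_eq_abs, Real.norm_eq_abs, Real.norm_eq_abs,
        Nat.abs_cast]
      exact mul_le_of_le_one_left (by positivity) (hc1 n)
    rw [hs.tsum_eq_zero_add]
    simp only [Nat.cast_zero, zero_mul, mul_zero, zero_add, Nat.cast_add, Nat.cast_one,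
      Nat.add_sub_cancel]
    refine tsum_congr fun n => ?_
    ring
  · have hy' : |y| ≤ r := by simpa using (Metric.mem_ball.1 hy).le
    rw [norm_mul, norm_mul, norm_pow, Real.norm_eq_abs, Real.norm_eq_abs, Real.norm_eq_abs,
        Nat.abs_cast]
    refine (mul_le_of_le_one_left (by positivity) (hc1 n)).trans ?_
    gcongr

lemma hyp_eq (a b z : ℝ) : hyp2F1 a b 1 z = ∑' n, hc a b n * z ^ n := by
  unfold hyp2F1 hc
  refine tsum_congr fun n => ?_
  ring

noncomputable def hd (a b z : ℝ) : ℝ := ∑' n : ℕ, ((n : ℝ) + 1) * hc a b (n + 1) * z ^ n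

lemma hyp_deriv {a b : ℝ} (ha : 0 < a) (hb : 0 < b) (hab : a + b = 1) {z : ℝ} (hz : |z| < 1) :
    HasDerivAt (hyp2F1 a b 1) (hd a b z) z := by
  have : hyp2F1 a b 1 = fun z => ∑' n, hc a b n * z ^ n := funext (hyp_eq a b)
  rw [this]
  refine ps_hasDerivAt (fun n => ?_) hz
  have := hc_bound ha hb hab n
  rw [abs_of_nonneg this.1]
  exact this.2

/-- coefficients of `z (1-z) dF` -/
noncomputable def he (a b : ℝ) : ℕ → ℝ
  | 0 => 0
  | n + 1 => ((n : ℝ) + 1) * hc a b (n + 1) - n * hc a b n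

lemma he_succ {a b : ℝ} (hab : a + b = 1) (n : ℕ) :
    ((n : ℝ) + 1) * he a b (n + 1) = a * b * hc a b n := by
  have h := hc_succ a b n
  simp only [he]
  have hb' : b = 1 - a := by linarith
  subst hb'
  linear_combination h

lemma he_bound {a b : ℝ} (ha : 0 < a) (hb : 0 < b) (hab : a + b = 1) (n : ℕ) :
    |he a b n| ≤ 1 := by
  cases n with
  | zero => simp [he]
  | succ n =>
    have h := he_succ hab n
    have h1 := hc_bound ha hb hab n
    have h2 : |((n : ℝ) + 1)| * |he a b (n + 1)| ≤ 1 := by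
      rw [← abs_mul, h, abs_of_nonneg (by have := h1.1; positivity)]
      have : a * b ≤ 1 := by nlinarith
      exact mul_le_one₀ this h1.1 h1.2
    have h3 : (1 : ℝ) ≤ |((n : ℝ) + 1)| := by
      rw [abs_of_nonneg (by positivity)]
      have : (0 : ℝ) ≤ n := by positivity
      linarith
    have := abs_nonneg (he a b (n + 1))
    nlinarith

lemma he_sum {a b : ℝ} (ha : 0 < a) (hb : 0 < b) (hab : a + b = 1) {z : ℝ} (hz : |z| < 1) :
    ∑' n, he a b n * z ^ n = z * (1 - z) * hd a b z := by
  have hcb : ∀ n, |hc a b n| ≤ 1 := fun n => by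
    have := hc_bound ha hb hab n
    rw [abs_of_nonneg this.1]
    exact this.2
  have hs := ps_summable_mul hcb hz
  have hs1 := (summable_nat_add_iff 1).2 hs
  have e1 : z * hd a b z = ∑' n : ℕ, (n : ℝ) * hc a b n * z ^ n := by
    rw [hs.tsum_eq_zero_add, hd, ← tsum_mul_left]
    simp
    refine tsum_congr fun n => ?_
    ring
  have e2 : z * hd a b z = ∑' n : ℕ, ((n + 1 : ℕ) : ℝ) * hc a b (n + 1) * z ^ (n + 1) := by
    rw [hd, ← tsum_mul_left]
    refine tsum_congr fun n => ?_
    push_cast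
    ring
  rw [(ps_summable (he_bound ha hb hab) hz).tsum_eq_zero_add]
  have : z * (1 - z) * hd a b z = z * hd a b z - z * (z * hd a b z) := by ring
  rw [this]
  nth_rewrite 2 [e1]
  rw [e2, ← tsum_mul_left, ← hs1.tsum_sub (hs.mul_left z)]
  simp [he]
  refine tsum_congr fun n => ?_
  ring

lemma hyp_deriv2 {a b : ℝ} (ha : 0 < a) (hb : 0 < b) (hab : a + b = 1) {z : ℝ} (hz : |z| < 1) :
    HasDerivAt (fun z => z * (1 - z) * hd a b z) (a * b * hyp2F1 a b 1 z) z := by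
  have h := ps_hasDerivAt (he_bound ha hb hab) hz
  have e : (∑' n : ℕ, ((n : ℝ) + 1) * he a b (n + 1) * z ^ n) = a * b * hyp2F1 a b 1 z := by
    rw [hyp_eq, ← tsum_mul_left]
    refine tsum_congr fun n => ?_
    rw [he_succ hab]
    ring
  rw [e] at h
  refine h.congr_of_eventuallyEq ?_
  have : ∀ᶠ y : ℝ in nhds z, |y| < 1 := continuous_abs.continuousAt.eventually_lt_const hz
  filter_upwards [this] with y hy
  exact (he_sum ha hb hab hy).symm

lemma hyp_pos {a b : ℝ} (ha : 0 < a) (hb : 0 < b) (hab : a + b = 1) {z : ℝ} (h0 : 0 ≤ z)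
    (hz : z < 1) : 0 < hyp2F1 a b 1 z := by
  have hz' : |z| < 1 := by rwa [abs_of_nonneg h0]
  have hcb : ∀ n, |hc a b n| ≤ 1 := fun n => by
    have := hc_bound ha hb hab n
    rw [abs_of_nonneg this.1]
    exact this.2
  rw [hyp_eq]
  refine (ps_summable hcb hz').tsum_pos (fun n => ?_) 0 ?_
  · have := (hc_bound ha hb hab n).1
    positivity
  · simp [hc_zero]

lemma hyp_zero (a b : ℝ) : hyp2F1 a b 1 0 = 1 := by
  rw [hyp_eq, tsum_eq_single 0]
  · simp [hc_zero]
  · intro n hn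
    simp [hn]

lemma α_range {p : ℝ} (hp0 : 0 ≤ p) (hp1 : p < 1) : 0 ≤ α p ∧ α p < 1 := by
  unfold α
  refine ⟨by positivity, ?_⟩
  rw [div_lt_one (by positivity)]
  have : 0 < (1 - p) * (1 + p) ^ 3 := mul_pos (by linarith) (by positivity)
  nlinarith

lemma β_range {p : ℝ} (hp0 : 0 ≤ p) (hp1 : p < 1) : 0 ≤ β p ∧ β p < 1 := by
  unfold β
  refine ⟨by positivity, ?_⟩
  rw [div_lt_one (by positivity)]
  have : 0 < ((1 - p) * (2 + p) * (1 + 2 * p)) ^ 2 := by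
    have : 0 < 1 - p := by linarith
    positivity
  nlinarith

noncomputable def dalpha (p : ℝ) : ℝ := 6 * p ^ 2 * (1 + p) ^ 2 / (1 + 2 * p) ^ 2

noncomputable def dbeta (p : ℝ) : ℝ :=
  27 * p * (1 + p) * (1 + 2 * p) * (1 - p) * (2 + p) / (4 * (1 + p + p ^ 2) ^ 4)

lemma α_deriv {p : ℝ} (hp0 : 0 ≤ p) : HasDerivAt α (dalpha p) p := by
  have h1 : (1 + 2 * p) ≠ 0 := by positivity
  have h := (((hasDerivAt_id p).pow 3).mul ((hasDerivAt_id p).const_add 2)).div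
    (((hasDerivAt_id p).const_mul 2).const_add 1) h1
  refine h.congr_deriv ?_
  simp [dalpha]
  field_simp
  ring

lemma β_deriv {p : ℝ} (hp0 : 0 ≤ p) : HasDerivAt β (dbeta p) p := by
  have h1 : (4 * (1 + p + p ^ 2) ^ 3) ≠ 0 := by positivity
  have h1' : (1 + p + p ^ 2) ≠ 0 := by positivity
  have h := ((((hasDerivAt_id p).pow 2).const_mul 27).mul
    (((hasDerivAt_id p).const_add 1).pow 2)).div
    (((((hasDerivAt_id p).const_add 1).add ((hasDerivAt_id p).pow 2)).pow 3).const_mul 4) h1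
  refine h.congr_deriv ?_
  simp [dbeta]
  field_simp
  ring

lemma sqrt_deriv {p : ℝ} (hp0 : 0 ≤ p) :
    HasDerivAt (fun p => √(1 + 2 * p)) (1 / √(1 + 2 * p)) p := by
  have h1 : (1 + 2 * p) ≠ 0 := by positivity
  have h := (((hasDerivAt_id p).const_mul 2).const_add 1).sqrt h1
  refine h.congr_deriv ?_
  simp
  field_simp

noncomputable def dgamma (p : ℝ) : ℝ := 3 * p * (1 + p) / ((1 + 2 * p) * √(1 + 2 * p))

lemma γ_deriv {p : ℝ} (hp0 : 0 ≤ p) : HasDerivAt γ (dgamma p) p := by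
  have hs : √(1 + 2 * p) ≠ 0 := by positivity
  have h2 : √(1 + 2 * p) ^ 2 = 1 + 2 * p := Real.sq_sqrt (by positivity)
  have h := ((((hasDerivAt_id p).const_add 1).add ((hasDerivAt_id p).pow 2))).div
    (sqrt_deriv hp0) hs
  refine h.congr_deriv ?_
  simp only [dgamma]
  rw [← h2]
  simp
  field_simp
  rw [h2]
  ring

/-- the product of P and the derivative of γ -/
noncomputable def Q (p : ℝ) : ℝ :=
  3 * (1 - p) * (2 + p) * p ^ 2 * (1 + p) ^ 2 / (4 * (1 + p + p ^ 2) ^ 2 * √(1 + 2 * p))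

/-- `(3/2) / γ` -/
noncomputable def R (p : ℝ) : ℝ := 3 / 2 * (√(1 + 2 * p) / (1 + p + p ^ 2))

lemma R_deriv {p : ℝ} (hp0 : 0 ≤ p) : HasDerivAt R (- (3 / 2) * dgamma p / (γ p) ^ 2) p := by
  have hs : √(1 + 2 * p) ≠ 0 := by positivity
  have h1' : (1 + p + p ^ 2) ≠ 0 := by positivity
  have h2 : √(1 + 2 * p) ^ 2 = 1 + 2 * p := Real.sq_sqrt (by positivity)
  have h := ((sqrt_deriv hp0).div
    ((((hasDerivAt_id p).const_add 1).add ((hasDerivAt_id p).pow 2))) h1').const_mul (3 / 2)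
  refine h.congr_deriv ?_
  simp only [dgamma, γ]
  rw [← h2]
  simp
  field_simp
  rw [h2]
  ring

lemma Q_deriv {p : ℝ} (hp0 : 0 ≤ p) :
    HasDerivAt Q (2 / 9 * γ p * dbeta p - 1 / 4 * R p * dalpha p) p := by
  have hs : √(1 + 2 * p) ≠ 0 := by positivity
  have h1 : (1 + p + p ^ 2) ≠ 0 := by positivity
  have h3 : (1 + 2 * p) ≠ 0 := by positivity
  have h2 : √(1 + 2 * p) ^ 2 = 1 + 2 * p := Real.sq_sqrt (by positivity)
  have hid := hasDerivAt_id p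
  have h := ((((hid.const_sub 1).const_mul 3).mul (hid.const_add 2)).mul (hid.pow 2)).mul
    ((hid.const_add 1).pow 2) |>.div
    ((((((hid.const_add 1).add (hid.pow 2))).pow 2).const_mul 4).mul (sqrt_deriv hp0))
    (by simpa using ⟨h1, hs⟩)
  refine h.congr_deriv ?_
  simp [γ, dbeta, R, dalpha]
  field_simp
  rw [h2]
  field_simp
  ring

lemma W_deriv {p : ℝ} (hp0 : 0 ≤ p) (hp1 : p < 1) :
    HasDerivAt (fun p => Q p * (hyp2F1 (1/3) (2/3) 1 (β p) * hyp2F1 (1/2) (1/2) 1 (α p))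
      + R p * (hyp2F1 (1/3) (2/3) 1 (β p) * (α p * (1 - α p) * hd (1/2) (1/2) (α p)))
      - γ p * ((β p * (1 - β p) * hd (1/3) (2/3) (β p)) * hyp2F1 (1/2) (1/2) 1 (α p))) 0 p := by
  have hα := α_range hp0 hp1
  have hβ := β_range hp0 hp1
  have hα1 : |α p| < 1 := by rw [abs_of_nonneg hα.1]; exact hα.2
  have hβ1 : |β p| < 1 := by rw [abs_of_nonneg hβ.1]; exact hβ.2
  have f := (hyp_deriv (a := 1/3) (b := 2/3) (by norm_num) (by norm_num) (by norm_num) hβ1).comp p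
    (β_deriv hp0)
  have A := (hyp_deriv2 (a := 1/3) (b := 2/3) (by norm_num) (by norm_num) (by norm_num) hβ1).comp p
    (β_deriv hp0)
  have g := (hyp_deriv (a := 1/2) (b := 1/2) (by norm_num) (by norm_num) (by norm_num) hα1).comp p
    (α_deriv hp0)
  have B := (hyp_deriv2 (a := 1/2) (b := 1/2) (by norm_num) (by norm_num) (by norm_num) hα1).comp p
    (α_deriv hp0)
  have h := (((Q_deriv hp0).mul (f.mul g)).add ((R_deriv hp0).mul (f.mul B))).sub
    ((γ_deriv hp0).mul (A.mul g))
  refine h.congr_deriv ?_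
  simp only [Function.comp, Pi.mul_apply]
  have hs : √(1 + 2 * p) ≠ 0 := by positivity
  have h1 : (1 + p + p ^ 2) ≠ 0 := by positivity
  have h3 : (1 + 2 * p) ≠ 0 := by positivity
  have h2 : √(1 + 2 * p) ^ 2 = 1 + 2 * p := Real.sq_sqrt (by positivity)
  have e1 : Q p * dbeta p = dgamma p * (β p * (1 - β p)) := by
    simp only [Q, dbeta, dgamma, β]
    field_simp
    ring
  have e2 : Q p * dalpha p = 3 / 2 * dgamma p / γ p ^ 2 * (α p * (1 - α p)) := by
    simp only [Q, dalpha, dgamma, α, γ]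
    field_simp
    rw [mul_comm p 2, h2]
    ring
  have e3 : R p * dbeta p * (α p * (1 - α p)) = γ p * dalpha p * (β p * (1 - β p)) := by
    simp only [R, dbeta, dalpha, α, β, γ]
    field_simp
    rw [h2]
    field_simp
    ring
  generalize hyp2F1 (1/3) (2/3) 1 (β p) = F
  generalize hyp2F1 (1/2) (1/2) 1 (α p) = G
  generalize hd (1/3) (2/3) (β p) = F1
  generalize hd (1/2) (1/2) (α p) = G1
  linear_combination F1 * G * e1 + F * G1 * e2 + F1 * G1 * e3

lemma const_of_deriv {f : ℝ → ℝ} (h : ∀ p, 0 ≤ p → p < 1 → HasDerivAt f 0 p) (p : ℝ)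
    (hp0 : 0 ≤ p) (hp1 : p < 1) : f p = f 0 := by
  refine constant_of_has_deriv_right_zero (a := 0) (b := p) (f := f) ?_ ?_ p ⟨hp0, le_rfl⟩
  · intro x hx
    exact (h x hx.1 (hx.2.trans_lt hp1)).continuousAt.continuousWithinAt
  · intro x hx
    exact (h x hx.1 (hx.2.trans hp1)).hasDerivWithinAt

lemma quot_deriv {p : ℝ} (hp0 : 0 ≤ p) (hp1 : p < 1) :
    HasDerivAt (fun p => hyp2F1 (1/3) (2/3) 1 (β p) / (γ p * hyp2F1 (1/2) (1/2) 1 (α p))) 0 p := by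
  have hW := const_of_deriv (fun p h0 h1 => W_deriv h0 h1) p hp0 hp1
  have hα := α_range hp0 hp1
  have hβ := β_range hp0 hp1
  have hα1 : |α p| < 1 := by rw [abs_of_nonneg hα.1]; exact hα.2
  have hβ1 : |β p| < 1 := by rw [abs_of_nonneg hβ.1]; exact hβ.2
  have f := (hyp_deriv (a := 1/3) (b := 2/3) (by norm_num) (by norm_num) (by norm_num) hβ1).comp p
    (β_deriv hp0)
  have g := (hyp_deriv (a := 1/2) (b := 1/2) (by norm_num) (by norm_num) (by norm_num) hα1).comp p
    (α_deriv hp0)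
  have hG := hyp_pos (a := 1/2) (b := 1/2) (by norm_num) (by norm_num) (by norm_num) hα.1 hα.2
  have hγ : 0 < γ p := by unfold γ; positivity
  have h := f.div ((γ_deriv hp0).mul g) (mul_pos hγ hG).ne'
  refine h.congr_deriv ?_
  simp only [Function.comp, Pi.mul_apply]
  rw [div_eq_zero_iff]
  left
  have z1 : α 0 = 0 := by simp [α]
  have z2 : β 0 = 0 := by simp [β]
  have z3 : Q 0 = 0 := by simp [Q]
  simp only [z1, z2, z3] at hW
  rcases hp0.eq_or_lt with rfl | hpos
  · simp [dbeta, dalpha, dgamma]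
  have hs : √(1 + 2 * p) ≠ 0 := by positivity
  have h1 : (1 + p + p ^ 2) ≠ 0 := by positivity
  have h3 : (1 + 2 * p) ≠ 0 := by positivity
  have h2 : √(1 + 2 * p) ^ 2 = 1 + 2 * p := Real.sq_sqrt (by positivity)
  -- the factor `P`
  obtain ⟨P, hP⟩ : ∃ P, P = (1 - p) * (2 + p) * (1 + 2 * p) * p * (1 + p) /
    (4 * (1 + p + p ^ 2) ^ 2) := ⟨_, rfl⟩
  have hP0 : P ≠ 0 := by
    have : 0 < 1 - p := by linarith
    rw [hP]
    positivity
  have e1 : P * dbeta p = β p * (1 - β p) := by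
    simp only [hP, dbeta, β]
    field_simp
    ring
  have e2 : P * dgamma p = Q p := by
    simp only [hP, dgamma, Q]
    field_simp
  have e3 : P * γ p * dalpha p = R p * (α p * (1 - α p)) := by
    simp only [hP, γ, dalpha, R, α]
    field_simp
    rw [mul_comm p 2, h2]
    ring
  apply mul_left_cancel₀ hP0
  generalize hyp2F1 (1/3) (2/3) 1 (β p) = F at *
  generalize hyp2F1 (1/2) (1/2) 1 (α p) = G at *
  generalize hd (1/3) (2/3) (β p) = F1 at *
  generalize hd (1/2) (1/2) (α p) = G1 at *
  linear_combination (γ p * F1 * G) * e1 - F * G * e2 - F * G1 * e3 - hW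

/-- Theorem 5.6 of Ramanujan–Berndt–Bhargava–Garvan. -/
theorem RBBG_formula (p : ℝ) (hp0 : 0 ≤ p) (hp1 : p < 1) :
    hyp2F1 (1/3) (2/3) 1 (β p) = γ p * hyp2F1 (1/2) (1/2) 1 (α p) := by
  have h := const_of_deriv (fun p h0 h1 => quot_deriv h0 h1) p hp0 hp1
  have hα := α_range hp0 hp1
  have hG := hyp_pos (a := 1/2) (b := 1/2) (by norm_num) (by norm_num) (by norm_num) hα.1 hα.2
  have hγ : 0 < γ p := by unfold γ; positivity
  have z1 : α 0 = 0 := by simp [α]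
  have z2 : β 0 = 0 := by simp [β]
  have z3 : γ 0 = 1 := by simp [γ]
  simp only [z1, z2, z3, hyp_zero] at h
  rw [div_eq_iff (mul_pos hγ hG).ne'] at h
  linarith
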